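/- The Benlolo–Sanderson invariant I^s_{C_1,C_k} is a nonzero homogeneous polynomial in the coordinates x_{u,v} whose degree equals the number of boxes in the rows R_1,…,R_s lying in the columns C_2,…,C_k, namely Σ_{i=2}^{k} min(s, c_i); equivalently, the degree of I^s_{C,C'} equals the number of entries of the left rectangle R^s ∩ ]C,C']. -/

import Mathlib

/-!
Write `S_p = c_0 + ⋯ + c_{p-1}`, `N = n - s` and `D = Σ_{i=2}^{k} min(s, c_i)`. In the Leibniz
expansion of the determinant every entry is `X`, an indeterminate `x_{u,v}`, or `0`, so the
permutation `σ` contributes `± X ^ f` times a monomial of degree `N - f`, where `f` is the number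
of columns at which `σ` picks the diagonal entry `X` (or it contributes `0`). Hence the coefficient
of `X ^ e` is homogeneous of degree `N - e`, and it remains to see that the lowest power is
`X ^ (N - D)`.

* No lower power occurs (`card_moved_le`). Suppose `σ` contributes. All columns in blocks `< p`
  take their rows in blocks `< p`. There are `S_p - s` such columns and `S_p` such rows, so exactly
  `s` columns in blocks `≥ p` take a row in a block `< p`; in particular at most `min(s, c_p)`
  columns of block `p` take an off-diagonal entry.
* The power `X ^ (N - D)` does occur (`exists_extremal_perm`). Sending the box of height `t < s` of
  a column to the box of height `t` in the nearest column to the left that is high enough, and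
  fixing the boxes of height `≥ s`, gives a permutation with exactly `D` off-diagonal entries.
  Specialising the indeterminates it uses to `1` and all others to `0` yields, after permuting the
  rows, a triangular matrix with determinant `X ^ (N - D)`.
-/

/-- the (0-based) diagonal block containing the (0-based) index `u`. -/
noncomputable def blockOf (c : ℕ → ℕ) (u : ℕ) : ℕ :=
  sInf {p : ℕ | u < ∑ j ∈ Finset.range (p + 1), c j}

/-- the generic entry of the nilradical: the indeterminate `x_{u,v}` if the
(0-based) indices `u`, `v` lie strictly above the block diagonal, else `0`. -/
noncomputable def genEntry (c : ℕ → ℕ) (u v : ℕ) : MvPolynomial (ℕ × ℕ) ℂ :=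
  if blockOf c u < blockOf c v then MvPolynomial.X (u, v) else 0

/-- the Benlolo–Sanderson determinant: for the pair of columns `(a,b)` of height
`s`, the minor of `X•Id + (generic nilradical matrix)` on the rows `[α, β-s)` and
the columns `[α+s, β)` where `α = c_0+⋯+c_{a-1}` and `β = c_0+⋯+c_b`, viewed as a
polynomial in the variable `X` (the paper's `c`). -/
noncomputable def bsPoly (c : ℕ → ℕ) (a b s : ℕ) :
    Polynomial (MvPolynomial (ℕ × ℕ) ℂ) :=
  Matrix.det (Matrix.of fun (i j :
      Fin ((∑ l ∈ Finset.range (b + 1), c l) - (∑ l ∈ Finset.range a, c l) - s)) =>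
    (if (∑ l ∈ Finset.range a, c l) + i.1 = (∑ l ∈ Finset.range a, c l) + s + j.1
        then Polynomial.X else 0) +
      Polynomial.C (genEntry c ((∑ l ∈ Finset.range a, c l) + i.1)
        ((∑ l ∈ Finset.range a, c l) + s + j.1)))

/-- the Benlolo–Sanderson invariant `I^s_{C_a,C_b}`: the coefficient of the
lowest power of the auxiliary variable occurring in `bsPoly`. -/
noncomputable def bsInvariant (c : ℕ → ℕ) (a b s : ℕ) : MvPolynomial (ℕ × ℕ) ℂ :=
  (bsPoly c a b s).trailingCoeff

/-- the coordinates of a matrix, as a valuation of the variables `(u,v)`. -/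
noncomputable def matCoords {n : ℕ} (M : Matrix (Fin n) (Fin n) ℂ) : ℕ × ℕ → ℂ :=
  fun p => if h : p.1 < n ∧ p.2 < n then M ⟨p.1, h.1⟩ ⟨p.2, h.2⟩ else 0

/-- evaluation of a polynomial in the coordinates at a matrix. -/
noncomputable def evalBS {n : ℕ} (M : Matrix (Fin n) (Fin n) ℂ)
    (p : MvPolynomial (ℕ × ℕ) ℂ) : ℂ :=
  MvPolynomial.eval (matCoords M) p

/-! ### Blocks -/

/-- The partial sum `S_p`: the number of indices lying in the blocks `0, …, p - 1`. -/
def psum (c : ℕ → ℕ) (p : ℕ) : ℕ := ∑ j ∈ Finset.range p, c j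

lemma psum_succ (c : ℕ → ℕ) (p : ℕ) : psum c (p + 1) = psum c p + c p :=
  Finset.sum_range_succ _ _

lemma psum_mono (c : ℕ → ℕ) : Monotone (psum c) :=
  monotone_nat_of_le_succ fun p => by rw [psum_succ]; omega

/-- The bound `u < S_k` ensures that the infimum defining `blockOf` is attained. -/
lemma blockOf_lt_iff {c : ℕ → ℕ} {k u : ℕ} (hu : u < psum c (k + 1)) (p : ℕ) :
    blockOf c u < p ↔ u < psum c p := by
  have hne : {p : ℕ | u < ∑ j ∈ Finset.range (p + 1), c j}.Nonempty := ⟨k, hu⟩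
  constructor
  · intro h
    have h1 : u < psum c (blockOf c u + 1) := Nat.sInf_mem hne
    exact lt_of_lt_of_le h1 (psum_mono c h)
  · intro h
    cases p with
    | zero => simp [psum] at h
    | succ p =>
      have h2 : blockOf c u ≤ p := Nat.sInf_le h
      omega

lemma blockOf_eq_iff {c : ℕ → ℕ} {k u : ℕ} (hu : u < psum c (k + 1)) (p : ℕ) :
    blockOf c u = p ↔ psum c p ≤ u ∧ u < psum c (p + 1) := by
  have h1 := blockOf_lt_iff hu p
  have h2 := blockOf_lt_iff hu (p + 1)
  omega

lemma card_fin_interval {N s a b : ℕ} (ha : s ≤ a) (hb : b ≤ N + s) :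
    (Finset.univ.filter fun i : Fin N => a ≤ s + i.1 ∧ s + i.1 < b).card = b - a := by
  rw [← Nat.card_Ico a b]
  refine Finset.card_bij (fun i _ => s + i.1) ?_ ?_ ?_
  · intro i hi
    simpa using hi
  · intro i _ j _ h
    ext
    simpa using h
  · intro v hv
    rw [Finset.mem_Ico] at hv
    exact ⟨⟨v - s, by omega⟩, by simp; omega, by simp; omega⟩

/-! ### The bound on off-diagonal entries -/

/-- If each column `s + i` is matched by `σ` to its diagonal row or to a row in an earlier block,
then at most `Σ_{p ≥ 1} min(s, c_p)` columns are matched off the diagonal. The bound holds block by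
block: at most `min(s, c_p)` columns of the block `p` are matched off the diagonal. -/
lemma card_moved_le {c : ℕ → ℕ} {m N s : ℕ} (hN : psum c m = N) (h0 : c 0 = s) (hm : c m = s)
    (σ : Equiv.Perm (Fin N))
    (hσ : ∀ i, (σ i).1 = s + i.1 ∨ blockOf c (σ i).1 < blockOf c (s + i.1)) :
    (Finset.univ.filter fun i : Fin N => (σ i).1 ≠ s + i.1).card
      ≤ ∑ p ∈ Finset.Ico 1 (m + 1), min s (c p) := by
  have hS1 : psum c 1 = s := by simp [psum, h0]
  have hSm : psum c (m + 1) = N + s := by rw [psum_succ, hN, hm]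
  have hcol : ∀ (i : Fin N) p, blockOf c (s + i.1) < p ↔ s + i.1 < psum c p := fun i p =>
    blockOf_lt_iff (k := m) (by rw [hSm]; omega) p
  have hrow : ∀ (i : Fin N) p, blockOf c i.1 < p ↔ i.1 < psum c p := fun i p =>
    blockOf_lt_iff (k := m) (by rw [hSm]; omega) p
  rw [Finset.card_eq_sum_card_fiberwise (f := fun i : Fin N => blockOf c (s + i.1))
    (t := Finset.Ico 1 (m + 1))]
  swap
  · intro i _
    have h1 := hcol i 1
    have h2 := hcol i (m + 1)
    simp only [Finset.coe_Ico, Set.mem_Ico]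
    omega
  refine Finset.sum_le_sum fun p hp => ?_
  rw [Finset.mem_Ico] at hp
  have hp1 : s ≤ psum c p := hS1 ▸ psum_mono c hp.1
  have hpm : psum c p ≤ N := hN ▸ psum_mono c (by omega)
  have hpm' : psum c (p + 1) ≤ N + s := hSm ▸ psum_mono c (by omega)
  have hps := psum_succ c p
  refine le_min ?_ ?_
  · -- `A` and `E` are the columns whose matched row, respectively which themselves, lie in
    -- blocks `< p`; then `E ⊆ A`, and the moved columns of block `p` lie in `A \ E`.
    set A := Finset.univ.filter fun i : Fin N => blockOf c (σ i).1 < p with hA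
    set E := Finset.univ.filter fun i : Fin N => blockOf c (s + i.1) < p with hE
    have hAcard : A.card = psum c p := by
      have : A.card = (Finset.univ.filter fun i : Fin N => blockOf c i.1 < p).card := by
        refine Finset.card_equiv σ fun i => ?_
        simp [hA]
      rw [this]
      have h3 := card_fin_interval (N := N) (s := 0) (a := 0) (b := psum c p) le_rfl (by omega)
      rw [Nat.sub_zero] at h3
      rw [← h3]
      congr 1
      ext i
      simp [hrow]
    have hEcard : E.card = psum c p - s := by
      rw [← card_fin_interval (N := N) (s := s) (a := s) (b := psum c p) le_rfl (by omega)]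
      congr 1
      ext i
      simp [hE, hcol]
    have hEA : E ⊆ A := by
      intro i hi
      simp only [hE, hA, Finset.mem_filter, Finset.mem_univ, true_and] at hi ⊢
      rcases hσ i with h | h
      · rwa [h]
      · omega
    have hAE : (A \ E).card = s := by
      rw [Finset.card_sdiff_of_subset hEA, hAcard, hEcard]
      omega
    refine le_of_le_of_eq (Finset.card_le_card fun i hi => ?_) hAE
    simp only [Finset.mem_filter, Finset.mem_univ, true_and] at hi
    simp only [hE, hA, Finset.mem_sdiff, Finset.mem_filter, Finset.mem_univ, true_and]
    have := hσ i
    omega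
  · have h3 := card_fin_interval (N := N) (s := s) (a := psum c p) (b := psum c (p + 1)) hp1 hpm'
    have h4 : c p = psum c (p + 1) - psum c p := by omega
    rw [h4, ← h3]
    refine Finset.card_le_card fun i hi => ?_
    simp only [Finset.mem_filter, Finset.mem_univ, true_and] at hi ⊢
    exact (blockOf_eq_iff (k := m) (by rw [hSm]; omega) p).1 hi.2

/-! ### A permutation attaining the bound -/

/-- The last block before `p` with more than `t` indices, i.e. the nearest column to the left of
`C_p` that has a box in row `t` (rows numbered from `0`). It is `0` if there is none. -/
def prevBlock (c : ℕ → ℕ) (t p : ℕ) : ℕ := Nat.findGreatest (fun q => t < c q) (p - 1)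

/-- The witness matches the column at height `t` of block `p` to the row at height `t` of block
`prevBlock c t p` if `t < s`, and to its diagonal row otherwise. -/
lemma exists_extremal_perm {c : ℕ → ℕ} {m N s : ℕ} (hN : psum c m = N) (h0 : c 0 = s)
    (hm : c m = s) :
    ∃ σ : Equiv.Perm (Fin N),
      (∀ i, (σ i).1 = s + i.1 ∨
        ((σ i).1 < s + i.1 ∧ blockOf c (σ i).1 < blockOf c (s + i.1))) ∧
      ∑ p ∈ Finset.Ico 1 (m + 1), min s (c p) ≤
        (Finset.univ.filter fun i : Fin N => (σ i).1 ≠ s + i.1).card := by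
  have hS1 : psum c 1 = s := by simp [psum, h0]
  have hSm : psum c (m + 1) = N + s := by rw [psum_succ, hN, hm]
  -- block and height of the column with index `s + i`
  have hblk : ∀ i : Fin N, ∃ p t, 1 ≤ p ∧ p ≤ m ∧ t < c p ∧ s + i.1 = psum c p + t := by
    intro i
    have hu : s + i.1 < psum c (m + 1) := by omega
    have h1 := blockOf_lt_iff hu 1
    have h2 := blockOf_lt_iff hu (m + 1)
    have h3 := (blockOf_eq_iff hu _).1 rfl
    rw [psum_succ] at h3
    exact ⟨blockOf c (s + i.1), s + i.1 - psum c (blockOf c (s + i.1)), by omega, by omega,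
      by omega, by omega⟩
  choose p t hp1 hpm ht hpt using hblk
  have hblock : ∀ q r, q ≤ m → r < c q → blockOf c (psum c q + r) = q := by
    intro q r hq hr
    have h1 := psum_succ c q
    have h2 : psum c (q + 1) ≤ psum c (m + 1) := psum_mono c (by omega)
    exact (blockOf_eq_iff (k := m) (by omega) q).2 (by omega)
  let Q : Fin N → ℕ := fun i => prevBlock c (t i) (p i)
  have hQlt : ∀ i, Q i < p i := by
    intro i
    have h1 : Q i ≤ p i - 1 := Nat.findGreatest_le _
    have h2 := hp1 i
    omega
  have hQc : ∀ i, t i < s → t i < c (Q i) := fun i h =>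
    Nat.findGreatest_spec (P := fun q => t i < c q) (Nat.zero_le _) (h0.symm ▸ h)
  have hQge : ∀ i q, q < p i → t i < c q → q ≤ Q i := fun i q hq h =>
    Nat.le_findGreatest (by omega) h
  have hQS : ∀ i, t i < s → psum c (Q i) + t i < psum c (p i) := by
    intro i h
    have h1 := hQc i h
    have h2 := psum_succ c (Q i)
    have h3 : psum c (Q i + 1) ≤ psum c (p i) := psum_mono c (hQlt i)
    omega
  let g : Fin N → ℕ := fun i => if t i < s then psum c (Q i) + t i else s + i.1
  have hgN : ∀ i, g i < N := by
    intro i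
    by_cases h : t i < s
    · have h1 := hQS i h
      have h2 : psum c (p i) ≤ psum c m := psum_mono c (hpm i)
      simp only [g, if_pos h]
      omega
    · -- the last column has height `s`, so a box of height `≥ s` is not in it
      have h1 : p i ≠ m := by
        intro hc
        have := ht i
        rw [hc, hm] at this
        exact h this
      have h2 := hpm i
      have h3 : psum c (p i + 1) ≤ psum c m := psum_mono c (by omega)
      have h4 := psum_succ c (p i)
      have h5 := ht i
      have h6 := hpt i
      simp only [g, if_neg h]
      omega
  -- the block of `g i`, and the fact that `g` preserves heights
  have hgform : ∀ i, ∃ q, q ≤ m ∧ t i < c q ∧ g i = psum c q + t i ∧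
      q = if t i < s then Q i else p i := by
    intro i
    have h2 := hpm i
    have h3 := hQlt i
    by_cases h : t i < s
    · exact ⟨Q i, by omega, hQc i h, by simp [g, h], by simp [h]⟩
    · exact ⟨p i, by omega, ht i, by simp [g, h, hpt i], by simp [h]⟩
  have hginj : ∀ i j, g i = g j → p i ≤ p j → i = j := by
    intro i j hij hle
    obtain ⟨q, hq, hqc, hqg, hqe⟩ := hgform i
    obtain ⟨q', hq', hqc', hqg', hqe'⟩ := hgform j
    have hqq : q = q' := by
      rw [← hblock q _ hq hqc, ← hqg, hij, hqg', hblock q' _ hq' hqc']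
    have htt : t i = t j := by
      rw [← hqq] at hqg'
      omega
    have hpp : p i = p j := by
      by_cases h : t i < s
      · rw [if_pos h] at hqe
        rw [if_pos (htt ▸ h)] at hqe'
        by_contra hne
        have h1 := hQge j (p i) (by omega) (htt ▸ ht i)
        have h2 := hQlt i
        omega
      · rw [if_neg h] at hqe
        rw [if_neg (htt ▸ h)] at hqe'
        omega
    have h1 := hpt i
    have h2 := hpt j
    rw [hpp, htt] at h1
    ext
    omega
  let f : Fin N → Fin N := fun i => ⟨g i, hgN i⟩
  have hf : Function.Injective f := by
    intro i j hij
    have hij' : g i = g j := by simpa [f] using hij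
    rcases le_total (p i) (p j) with h | h
    · exact hginj i j hij' h
    · exact (hginj j i hij'.symm h).symm
  refine ⟨Equiv.ofBijective f (Finite.injective_iff_bijective.1 hf), ?_, ?_⟩
  · intro i
    change g i = s + i.1 ∨ (g i < s + i.1 ∧ blockOf c (g i) < blockOf c (s + i.1))
    by_cases h : t i < s
    · right
      have h1 := hQS i h
      have h2 := hpt i
      have h3 := hQlt i
      have h4 := hpm i
      have hg : g i = psum c (Q i) + t i := by simp [g, h]
      rw [hg, hpt i, hblock _ _ (by omega) (hQc i h), hblock _ _ (hpm i) (ht i)]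
      omega
    · left
      simp [g, h]
  · change _ ≤ (Finset.univ.filter fun i : Fin N => g i ≠ s + i.1).card
    rw [Finset.card_eq_sum_card_fiberwise (f := p) (t := Finset.Ico 1 (m + 1))]
    swap
    · intro i _
      have h1 := hp1 i
      have h2 := hpm i
      simp only [Finset.coe_Ico, Set.mem_Ico]
      omega
    refine Finset.sum_le_sum fun q hq => ?_
    rw [Finset.mem_Ico] at hq
    have hq1 : s ≤ psum c q := hS1 ▸ psum_mono c hq.1
    have hqm : psum c (q + 1) ≤ N + s := hSm ▸ psum_mono c (by omega)
    have hqs := psum_succ c q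
    have h3 := card_fin_interval (N := N) (s := s) (a := psum c q)
      (b := psum c q + min s (c q)) hq1 (by omega)
    rw [Nat.add_sub_cancel_left] at h3
    rw [← h3]
    refine Finset.card_le_card fun i hi => ?_
    simp only [Finset.mem_filter, Finset.mem_univ, true_and] at hi ⊢
    have hpq : p i = q := by
      rw [← hblock (p i) _ (hpm i) (ht i), ← hpt i]
      exact (blockOf_eq_iff (k := m) (by omega) q).2 (by omega)
    have h4 := hpt i
    rw [hpq] at h4
    have h5 : t i < s := by omega
    have h6 := hQS i h5
    refine ⟨?_, hpq⟩
    simp only [g, if_pos h5]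
    rw [hpq] at h6
    omega

/-! ### The determinant -/

/-- The matrix underlying `bsPoly c 0 m s`, with its size `N` a free variable. -/
noncomputable def bsMatrix (c : ℕ → ℕ) (s N : ℕ) :
    Matrix (Fin N) (Fin N) (Polynomial (MvPolynomial (ℕ × ℕ) ℂ)) :=
  Matrix.of fun i j =>
    (if i.1 = s + j.1 then Polynomial.X else 0) + Polynomial.C (genEntry c i.1 (s + j.1))

lemma bsPoly_eq_det {c : ℕ → ℕ} {m N s : ℕ} (hN : psum c (m + 1) - s = N) :
    bsPoly c 0 m s = (bsMatrix c s N).det := by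
  subst hN
  simp [bsPoly, bsMatrix, psum]
  rfl

/-- The term of `σ` in the Leibniz expansion is a power of `X` times a homogeneous polynomial. -/
lemma prod_bsMatrix (c : ℕ → ℕ) (s N : ℕ) (σ : Equiv.Perm (Fin N)) :
    ∃ q : MvPolynomial (ℕ × ℕ) ℂ,
      ∏ i, bsMatrix c s N (σ i) i =
        Polynomial.X ^ (N - (Finset.univ.filter fun i : Fin N => (σ i).1 ≠ s + i.1).card)
          * Polynomial.C q ∧
      q.IsHomogeneous (Finset.univ.filter fun i : Fin N => (σ i).1 ≠ s + i.1).card ∧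
      (q ≠ 0 → ∀ i, (σ i).1 = s + i.1 ∨ blockOf c (σ i).1 < blockOf c (s + i.1)) := by
  refine ⟨∏ i : Fin N with (σ i).1 ≠ s + i.1, genEntry c (σ i).1 (s + i.1), ?_, ?_, ?_⟩
  · rw [← Finset.prod_filter_mul_prod_filter_not Finset.univ
      (fun i : Fin N => (σ i).1 = s + i.1)]
    congr 1
    · rw [Finset.prod_congr rfl (g := fun _ => Polynomial.X), Finset.prod_const]
      · congr 1
        have := Finset.card_filter_add_card_filter_not (s := (Finset.univ : Finset (Fin N)))
          (fun i : Fin N => (σ i).1 = s + i.1)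
        rw [Finset.card_univ, Fintype.card_fin] at this
        simp only [ne_eq]
        omega
      · intro i hi
        simp only [Finset.mem_filter, Finset.mem_univ, true_and] at hi
        simp [bsMatrix, genEntry, hi]
    · rw [map_prod]
      refine Finset.prod_congr rfl fun i hi => ?_
      simp only [Finset.mem_filter, Finset.mem_univ, true_and] at hi
      simp [bsMatrix, hi]
  · rw [Finset.card_eq_sum_ones]
    refine MvPolynomial.IsHomogeneous.prod _ _ _ fun i _ => ?_
    unfold genEntry
    split_ifs
    · exact MvPolynomial.isHomogeneous_X _ _
    · exact MvPolynomial.isHomogeneous_zero _ _ _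
  · intro hq i
    by_contra! hi
    refine hq (Finset.prod_eq_zero (i := i) (by simpa using hi.1) ?_)
    simp [genEntry, not_lt.2 hi.2]

/-- Let `σ` match each column to its diagonal row or to a smaller row in an earlier block.
Specialising the indeterminates met by `σ` to `1` and the others to `0` turns the determinant into `± X ^ f`, with `f` the number of diagonal
entries met by `σ`. -/
lemma map_det_bsMatrix {c : ℕ → ℕ} {s N : ℕ} (σ : Equiv.Perm (Fin N))
    (hσ : ∀ i, (σ i).1 = s + i.1 ∨
        ((σ i).1 < s + i.1 ∧ blockOf c (σ i).1 < blockOf c (s + i.1))) :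
    ∃ φ : MvPolynomial (ℕ × ℕ) ℂ →+* ℂ,
      ((Equiv.Perm.sign σ : ℤ) : Polynomial ℂ) * (bsMatrix c s N).det.map φ =
        Polynomial.X ^
          (N - (Finset.univ.filter fun i : Fin N => (σ i).1 ≠ s + i.1).card) := by
  classical
  let φ : MvPolynomial (ℕ × ℕ) ℂ →+* ℂ := MvPolynomial.eval fun q =>
    if ∃ i : Fin N, q = ((σ i).1, s + i.1) then 1 else 0
  have hφ : ∀ i j : Fin N, φ (genEntry c (σ i).1 (s + j.1)) =
      if i = j ∧ (σ i).1 ≠ s + i.1 then 1 else 0 := by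
    intro i j
    have hex : (∃ l : Fin N, (((σ i).1, s + j.1) : ℕ × ℕ) = ((σ l).1, s + l.1)) ↔ i = j := by
      constructor
      · rintro ⟨l, hl⟩
        simp only [Prod.mk.injEq, add_right_inj, Fin.val_inj, EmbeddingLike.apply_eq_iff_eq] at hl
        rw [hl.1, hl.2]
      · rintro rfl
        exact ⟨i, rfl⟩
    unfold genEntry
    split_ifs with h1 h2 h2
    · simp only [φ, MvPolynomial.eval_X]
      rw [if_pos (hex.2 h2.1)]
    · simp only [φ, MvPolynomial.eval_X]
      rw [if_neg]
      intro h
      have hij := hex.1 h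
      subst hij
      refine h2 ⟨rfl, fun h3 => ?_⟩
      rw [h3] at h1
      exact lt_irrefl _ h1
    · obtain ⟨rfl, h3⟩ := h2
      have := hσ i
      tauto
    · simp
  refine ⟨φ, ?_⟩
  have hdet : (bsMatrix c s N).det.map φ =
      ((bsMatrix c s N).map (Polynomial.mapRingHom φ)).det := by
    rw [← Polynomial.coe_mapRingHom, RingHom.map_det, RingHom.mapMatrix_apply]
  have hent : ∀ i j, (((bsMatrix c s N).map (Polynomial.mapRingHom φ)).submatrix σ id) i j =
      (if (σ i).1 = s + j.1 then Polynomial.X else 0) +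
        Polynomial.C (if i = j ∧ (σ i).1 ≠ s + i.1 then (1 : ℂ) else 0) := by
    intro i j
    rw [← hφ i j]
    simp only [bsMatrix, Matrix.submatrix_apply, Matrix.map_apply, Matrix.of_apply, id,
      Polynomial.coe_mapRingHom]
    split_ifs <;> simp
  rw [hdet, ← Matrix.det_permute, Matrix.det_of_isLowerTriangular]
  · rw [← Finset.prod_filter_mul_prod_filter_not Finset.univ
      (fun i : Fin N => (σ i).1 = s + i.1),
      Finset.prod_congr rfl (g := fun _ => Polynomial.X), Finset.prod_const,
      Finset.prod_eq_one, mul_one]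
    · congr 1
      have := Finset.card_filter_add_card_filter_not (s := (Finset.univ : Finset (Fin N)))
        (fun i : Fin N => (σ i).1 = s + i.1)
      rw [Finset.card_univ, Fintype.card_fin] at this
      simp only [ne_eq]
      omega
    · intro i hi
      simp only [Finset.mem_filter, Finset.mem_univ, true_and] at hi
      rw [hent]
      simp [hi]
    · intro i hi
      simp only [Finset.mem_filter, Finset.mem_univ, true_and] at hi
      rw [hent]
      simp [hi]
  · intro i j hij
    have hij' : i < j := hij
    rw [hent, if_neg, if_neg]
    · simp
    · rintro ⟨h, _⟩
      exact hij'.ne h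
    · intro h
      have h1 := hσ i
      have h2 : i.1 < j.1 := hij'
      omega

/-- Lemma 2.7.  Let `(c_0,…,c_{k-1})` be a composition of `n`
with `c_0 = c_{k-1} = s` and no intermediate column of height `s` (so the first
and last columns are a neighbouring pair of height `s`).  The Benlolo–Sanderson
invariant `I^s_{C_1,C_k}`, i.e. the coefficient of the lowest power of the
auxiliary variable in the `(n-s) × (n-s)` minor of `c·Id + X` on the rows
`{1,…,n-s}` and the columns `{s+1,…,n}` (where `X` is the generic matrix of the
nilradical), is a nonzero homogeneous polynomial in the coordinates `x_{u,v}`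
of degree `Σ_{i=2}^{k} min(s, c_i)`, the number of boxes of the left rectangle
`R^s ∩ ]C_1, C_k]`. -/
theorem bs_invariant_nonzero_homogeneous
    (k n s : ℕ) (hk : 2 ≤ k) (c : ℕ → ℕ)
    (hpos : ∀ i, i < k → 0 < c i)
    (hn : ∑ i ∈ Finset.range k, c i = n)
    (hfirst : c 0 = s) (hlast : c (k - 1) = s)
    (hmid : ∀ i, 0 < i → i < k - 1 → c i ≠ s) :
    bsInvariant c 0 (k - 1) s ≠ 0 ∧
      (bsInvariant c 0 (k - 1) s).IsHomogeneous
        (∑ i ∈ Finset.Ico 1 k, min s (c i)) := by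
  obtain ⟨m, rfl⟩ : ∃ m, k = m + 1 := ⟨k - 1, by omega⟩
  rw [Nat.add_sub_cancel] at hlast ⊢
  set D := ∑ i ∈ Finset.Ico 1 (m + 1), min s (c i) with hD
  set N := psum c m with hN
  have hdet : bsPoly c 0 m s = (bsMatrix c s N).det :=
    bsPoly_eq_det (by rw [psum_succ, hlast, Nat.add_sub_cancel])
  have hDN : D ≤ N := by
    obtain ⟨σ, -, hge⟩ := exists_extremal_perm hN.symm hfirst hlast
    exact hge.trans ((Finset.card_le_univ _).trans_eq (Fintype.card_fin N))
  -- the coefficients of the Leibniz terms up to `X ^ (N - D)`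
  have hterm : ∀ (σ : Equiv.Perm (Fin N)) (e : ℕ), e ≤ N - D →
      ((∏ i, bsMatrix c s N (σ i) i).coeff e).IsHomogeneous D ∧
      (e < N - D → (∏ i, bsMatrix c s N (σ i) i).coeff e = 0) := by
    intro σ e he
    obtain ⟨q, hq, hhom, hne⟩ := prod_bsMatrix c s N σ
    rw [hq, Polynomial.coeff_mul_C, Polynomial.coeff_X_pow]
    by_cases hq0 : q = 0
    · simp [hq0, MvPolynomial.isHomogeneous_zero]
    have hle := card_moved_le hN.symm hfirst hlast σ (hne hq0)
    have hleN : (Finset.univ.filter fun i : Fin N => (σ i).1 ≠ s + i.1).card ≤ N :=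
      (Finset.card_le_univ _).trans_eq (Fintype.card_fin N)
    split_ifs with h
    · rw [one_mul]
      refine ⟨?_, fun h' => by omega⟩
      have hcard : (Finset.univ.filter fun i : Fin N => (σ i).1 ≠ s + i.1).card = D := by omega
      rwa [hcard] at hhom
    · simp [MvPolynomial.isHomogeneous_zero]
  have hcoeff : ∀ e, (bsPoly c 0 m s).coeff e = ∑ σ : Equiv.Perm (Fin N),
      Equiv.Perm.sign σ • (∏ i, bsMatrix c s N (σ i) i).coeff e := by
    intro e
    rw [hdet, Matrix.det_apply, Polynomial.finsetSum_coeff]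
    refine Finset.sum_congr rfl fun σ _ => ?_
    rw [Units.smul_def, Units.smul_def, Polynomial.coeff_smul]
  have hlow : ∀ e < N - D, (bsPoly c 0 m s).coeff e = 0 := by
    intro e he
    rw [hcoeff]
    refine Finset.sum_eq_zero fun σ _ => ?_
    rw [(hterm σ e he.le).2 he, smul_zero]
  have hne : (bsPoly c 0 m s).coeff (N - D) ≠ 0 := by
    obtain ⟨σ, hσ, hge⟩ := exists_extremal_perm hN.symm hfirst hlast
    have hle := card_moved_le hN.symm hfirst hlast σ fun i => (hσ i).imp id And.right
    obtain ⟨φ, hφ⟩ := map_det_bsMatrix σ hσ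
    rw [le_antisymm hle hge, ← hdet] at hφ
    intro h
    have h1 := congrArg (fun P => Polynomial.coeff P (N - D)) hφ
    simp only [Polynomial.coeff_intCast_mul, Polynomial.coeff_map, h] at h1
    simp [hD] at h1
  have htd : (bsPoly c 0 m s).natTrailingDegree = N - D := by
    refine le_antisymm (Polynomial.natTrailingDegree_le_of_ne_zero hne) ?_
    exact Polynomial.le_natTrailingDegree (fun h => hne (by rw [h, Polynomial.coeff_zero])) hlow
  have hinv : bsInvariant c 0 m s = (bsPoly c 0 m s).coeff (N - D) := by
    rw [bsInvariant, Polynomial.trailingCoeff, htd]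
  rw [hinv]
  refine ⟨hne, ?_⟩
  rw [hcoeff]
  refine MvPolynomial.IsHomogeneous.sum _ _ _ fun σ _ => ?_
  rw [Units.smul_def, zsmul_eq_mul, ← map_intCast (MvPolynomial.C (σ := ℕ × ℕ) (R := ℂ)),
    ← MvPolynomial.smul_eq_C_mul]
  exact (MvPolynomial.homogeneousSubmodule _ _ D).smul_mem _ (hterm σ _ le_rfl).1
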